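/- Let k be an algebraically closed field of characteristic zero and let P ∈ k[x,y] be nonzero. Then the set of triples (p,q,μ), where p, q ≥ 1 are coprime natural numbers and μ ∈ k \ {0}, such that for some choice of p', q' ∈ ℕ with p·p' − q·q' = 1 the Newton transform σ_{(p,q,μ)}(P) is NOT of the form x₁^{n} y₁^{m} u(x₁,y₁) for some n, m ∈ ℕ and some u ∈ k[x₁,y₁] with u(0,0) ≠ 0 (a monomial times a unit), is a finite set. -/

import Mathlib

/-!
Expanding over the support of `P`, the monomial `c_d x^a y^b` (with `d = (a, b)`) contributes
`c_d μ^{q'a} x₁^{pa+qb} (y₁ + μ^{p'})^b` to the Newton transform. Factoring out `x₁^m` with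
`m = 𝔪_P(p,q)` leaves a polynomial `u` with
`u(0,0) = Σ_{pa+qb=m} c_d μ^{q'a+p'b}`, so the transform is `x₁^m` times a unit unless this face
sum vanishes (`faceSum_eq_zero`). Two facts then give finiteness.

* A vanishing face sum has at least two terms, so two distinct points of the support have the same
  `(p,q)`-weight. As `p` and `q` are coprime, `p` divides the nonzero difference of their
  second coordinates and `q` that of their first coordinates; hence `p` and `q` are bounded by the
  partial degrees of `P`.
* For fixed `(p,q)`, write `μ = ν^p`. On the face, `p(q'a + p'b) = q'm + b` because
  `pp' = qq' + 1`, so the face sum equals `ν^{q'm} Σ c_d ν^b`. Therefore `ν` is a root of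
  the one-variable polynomial `Σ c_d T^b`, which does not depend on `p'`, `q'`, and which is nonzero
  since a point of the face is determined by its second coordinate.
-/

open MvPolynomial

variable {k : Type*} [Field k]

/-- The Newton transformation `σ_{(p,q,μ)}` (with auxiliary exponents `p', q'`):
`σ_{(p,q,μ)}(P)(x₁,y₁) = P(μ^{q'} x₁^p, x₁^q (y₁ + μ^{p'}))`. -/
noncomputable def newtonTransform (p q p' q' : ℕ) (μ : k)
    (P : MvPolynomial (Fin 2) k) : MvPolynomial (Fin 2) k :=
  MvPolynomial.aeval
    ![C (μ ^ q') * X 0 ^ p, X 0 ^ q * (X 1 + C (μ ^ p'))] P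

/-- The support function value `𝔪_P(p,q) = min {p·a + q·b : (a,b) ∈ Supp P}`. -/
noncomputable def mSupp (p q : ℕ) (P : MvPolynomial (Fin 2) k) : ℕ :=
  sInf {n : ℕ | ∃ d ∈ P.support, p * d 0 + q * d 1 = n}

/-- The face polynomial of `P` in direction `(p,q)`:
`P_{(p,q)} = Σ_{(a,b) ∈ Supp P, p·a + q·b = 𝔪_P(p,q)} c_{a,b} x^a y^b`. -/
noncomputable def facePoly (p q : ℕ) (P : MvPolynomial (Fin 2) k) :
    MvPolynomial (Fin 2) k :=
  ∑ d ∈ P.support.filter (fun d => p * d 0 + q * d 1 = mSupp p q P),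
    monomial d (coeff d P)

/-- A polynomial of `k[x₁,y₁]` is a monomial times a unit if it has the form
`x₁^n y₁^m u(x₁,y₁)` with `u(0,0) ≠ 0`. -/
def IsMonomialTimesUnit (Q : MvPolynomial (Fin 2) k) : Prop :=
  ∃ (n m : ℕ) (u : MvPolynomial (Fin 2) k),
    MvPolynomial.eval (fun _ => (0 : k)) u ≠ 0 ∧ Q = X 0 ^ n * X 1 ^ m * u

/-- The exponents of `P` lying on the face in direction `(p,q)`. -/
noncomputable def faceSupp (p q : ℕ) (P : MvPolynomial (Fin 2) k) : Finset (Fin 2 →₀ ℕ) :=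
  P.support.filter (fun d => p * d 0 + q * d 1 = mSupp p q P)

theorem mem_faceSupp {p q : ℕ} {P : MvPolynomial (Fin 2) k} {d : Fin 2 →₀ ℕ} :
    d ∈ faceSupp p q P ↔ d ∈ P.support ∧ p * d 0 + q * d 1 = mSupp p q P := by
  simp [faceSupp]

theorem mSupp_le {p q : ℕ} {P : MvPolynomial (Fin 2) k} {d : Fin 2 →₀ ℕ}
    (hd : d ∈ P.support) : mSupp p q P ≤ p * d 0 + q * d 1 :=
  Nat.sInf_le ⟨d, hd, rfl⟩

theorem faceSupp_nonempty (p q : ℕ) {P : MvPolynomial (Fin 2) k} (hP : P ≠ 0) :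
    (faceSupp p q P).Nonempty := by
  obtain ⟨d, hd⟩ := support_nonempty.mpr hP
  obtain ⟨e, he, h⟩ : mSupp p q P ∈ {n : ℕ | ∃ d ∈ P.support, p * d 0 + q * d 1 = n} :=
    Nat.sInf_mem ⟨_, d, hd, rfl⟩
  exact ⟨e, mem_faceSupp.mpr ⟨he, h⟩⟩

theorem ext_of_weight_eq {p q n : ℕ} (hp : 1 ≤ p) {d e : Fin 2 →₀ ℕ}
    (hd : p * d 0 + q * d 1 = n) (he : p * e 0 + q * e 1 = n) (h : d 1 = e 1) : d = e := by
  ext i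
  fin_cases i
  · rw [h] at hd
    exact Nat.eq_of_mul_eq_mul_left hp (by simpa using hd.trans he.symm)
  · exact h

/-- If the Newton transform is not a monomial times a unit, then its coefficient at
`x₁^{𝔪_P(p,q)}` vanishes at `y₁ = 0`. -/
theorem faceSum_eq_zero {p q p' q' : ℕ} {μ : k} {P : MvPolynomial (Fin 2) k}
    (h : ¬ IsMonomialTimesUnit (newtonTransform p q p' q' μ P)) :
    ∑ d ∈ faceSupp p q P, coeff d P * μ ^ (q' * d 0 + p' * d 1) = 0 := by
  by_contra hne
  refine h ⟨mSupp p q P, 0, ∑ d ∈ P.support, C (coeff d P * μ ^ (q' * d 0)) *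
    X 0 ^ (p * d 0 + q * d 1 - mSupp p q P) * (X 1 + C (μ ^ p')) ^ d 1, ?_, ?_⟩
  · convert hne using 1
    rw [map_sum, faceSupp, Finset.sum_filter]
    refine Finset.sum_congr rfl fun d hd => ?_
    have hle := mSupp_le (p := p) (q := q) hd
    split_ifs with hw
    · simp [hw, pow_add, pow_mul, mul_assoc]
    · have : p * d 0 + q * d 1 - mSupp p q P ≠ 0 := by omega
      simp [this]
  · rw [newtonTransform, aeval_def, eval₂_eq', pow_zero, mul_one, Finset.mul_sum]
    refine Finset.sum_congr rfl fun d hd => ?_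
    have hle := mSupp_le (p := p) (q := q) hd
    have hX : (X 0 : MvPolynomial (Fin 2) k) ^ (p * d 0) * X 0 ^ (q * d 1) =
        X 0 ^ mSupp p q P * X 0 ^ (p * d 0 + q * d 1 - mSupp p q P) := by
      rw [← pow_add, ← pow_add, Nat.add_sub_cancel' hle]
    simp only [Fin.prod_univ_two, algebraMap_eq, Matrix.cons_val_zero, Matrix.cons_val_one,
      mul_pow, ← pow_mul, map_mul, map_pow]
    linear_combination (C (coeff d P) * C μ ^ (q' * d 0) * (X 1 + C μ ^ p') ^ d 1) * hX

/-- A direction `(p,q)` whose weight takes the same value at two distinct points of the support is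
bounded by the partial degrees of `P`. -/
theorem direction_le {p q : ℕ} {P : MvPolynomial (Fin 2) k} (hp : 1 ≤ p) (hq : 1 ≤ q)
    (hpq : Nat.Coprime p q) {d e : Fin 2 →₀ ℕ} (hd : d ∈ P.support) (he : e ∈ P.support)
    (hne : d ≠ e) (hw : p * d 0 + q * d 1 = p * e 0 + q * e 1) :
    p ≤ degreeOf 1 P ∧ q ≤ degreeOf 0 P := by
  have hd0 := monomial_le_degreeOf 0 hd
  have hd1 := monomial_le_degreeOf 1 hd
  have he0 := monomial_le_degreeOf 0 he
  have he1 := monomial_le_degreeOf 1 he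
  have h1 : d 1 ≠ e 1 := fun h => hne (ext_of_weight_eq hp hw rfl h)
  have h0 : d 0 ≠ e 0 := by
    intro h
    rw [h] at hw
    exact h1 (Nat.eq_of_mul_eq_mul_left hq (by omega))
  have hz : (p : ℤ) * (d 0 - e 0) = q * (e 1 - d 1) := by
    have : (p : ℤ) * d 0 + q * d 1 = p * e 0 + q * e 1 := by exact_mod_cast hw
    linear_combination this
  have hc : IsCoprime (p : ℤ) (q : ℤ) := Nat.isCoprime_iff_coprime.mpr hpq
  have hpd : (p : ℤ) ∣ e 1 - d 1 := hc.dvd_of_dvd_mul_left ⟨_, hz.symm⟩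
  have hqd : (q : ℤ) ∣ d 0 - e 0 := hc.symm.dvd_of_dvd_mul_left ⟨_, hz⟩
  have hple := Int.natAbs_le_of_dvd_ne_zero hpd (by omega)
  have hqle := Int.natAbs_le_of_dvd_ne_zero hqd (by omega)
  omega

/-- The face polynomial in direction `(p,q)` with `x` set to `1`, as a one-variable polynomial. -/
noncomputable def facePoly₁ (p q : ℕ) (P : MvPolynomial (Fin 2) k) : Polynomial k :=
  ∑ d ∈ faceSupp p q P, Polynomial.monomial (d 1) (coeff d P)

theorem facePoly₁_ne_zero {p q : ℕ} (hp : 1 ≤ p) {P : MvPolynomial (Fin 2) k} (hP : P ≠ 0) :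
    facePoly₁ p q P ≠ 0 := by
  obtain ⟨d, hd⟩ := faceSupp_nonempty p q hP
  intro h
  have hc := congrArg (fun F => Polynomial.coeff F (d 1)) h
  simp only [facePoly₁, Polynomial.finsetSum_coeff, Polynomial.coeff_zero] at hc
  rw [Finset.sum_eq_single_of_mem d hd, Polynomial.coeff_monomial_same] at hc
  · exact mem_support_iff.mp (mem_faceSupp.mp hd).1 hc
  · intro e he hed
    exact Polynomial.coeff_monomial_of_ne _ fun h1 =>
      hed (ext_of_weight_eq hp (mem_faceSupp.mp he).2 (mem_faceSupp.mp hd).2 h1.symm)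

/-- A vanishing face sum at `ν^p` makes `ν` a root of `facePoly₁`: on the face, `p` times the
exponent `q'a + p'b` is `q'𝔪_P(p,q) + b`. -/
theorem isRoot_facePoly₁ {p q p' q' : ℕ} {ν : k} (hν : ν ≠ 0) {P : MvPolynomial (Fin 2) k}
    (hpq : p * p' = q * q' + 1)
    (h : ∑ d ∈ faceSupp p q P, coeff d P * (ν ^ p) ^ (q' * d 0 + p' * d 1) = 0) :
    (facePoly₁ p q P).IsRoot ν := by
  have key : ν ^ (q' * mSupp p q P) * (facePoly₁ p q P).eval ν = 0 := by
    rw [← h, facePoly₁, Polynomial.eval_finsetSum, Finset.mul_sum]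
    refine Finset.sum_congr rfl fun d hd => ?_
    have hexp : p * (q' * d 0 + p' * d 1) = q' * mSupp p q P + d 1 := by
      rw [← (mem_faceSupp.mp hd).2]
      linear_combination d 1 * hpq
    rw [Polynomial.eval_monomial, ← pow_mul, hexp, pow_add]
    ring
  exact (mul_eq_zero.mp key).resolve_left (pow_ne_zero _ hν)

/-- Over an algebraically closed field of characteristic zero, for a nonzero
`P ∈ k[x,y]` there are only finitely many triples `(p,q,μ)` — with `p,q ≥ 1`
coprime and `μ ≠ 0` — such that for some `p', q' ∈ ℕ` with `p·p' − q·q' = 1`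
the Newton transform `σ_{(p,q,μ)}(P)` is not a monomial times a unit. -/
theorem finite_nonMonomial_newtonTransforms
    [IsAlgClosed k] [CharZero k]
    (P : MvPolynomial (Fin 2) k) (hP : P ≠ 0) :
    {t : ℕ × ℕ × k | 1 ≤ t.1 ∧ 1 ≤ t.2.1 ∧ Nat.Coprime t.1 t.2.1 ∧ t.2.2 ≠ 0 ∧
      ∃ p' q' : ℕ, t.1 * p' = t.2.1 * q' + 1 ∧
        ¬ IsMonomialTimesUnit (newtonTransform t.1 t.2.1 p' q' t.2.2 P)}.Finite := by
  have hfin : (⋃ s ∈ Set.Icc 1 (degreeOf 1 P) ×ˢ Set.Iic (degreeOf 0 P),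
      (fun ν : k => (s.1, s.2, ν ^ s.1)) '' {ν | (facePoly₁ s.1 s.2 P).IsRoot ν}).Finite :=
    ((Set.finite_Icc _ _).prod (Set.finite_Iic _)).biUnion fun s hs =>
      (Polynomial.finite_setOfPred_isRoot (facePoly₁_ne_zero hs.1.1 hP)).image _
  refine hfin.subset ?_
  rintro ⟨p, q, μ⟩ ⟨hp, hq, hpq, hμ, p', q', hpq', hbad⟩
  dsimp only at hp hq hpq hμ hpq' hbad
  have hsum := faceSum_eq_zero hbad
  obtain ⟨d, hd⟩ := faceSupp_nonempty p q hP
  have hterm : coeff d P * μ ^ (q' * d 0 + p' * d 1) ≠ 0 :=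
    mul_ne_zero (mem_support_iff.mp (mem_faceSupp.mp hd).1) (pow_ne_zero _ hμ)
  obtain ⟨e, he, hne⟩ : ∃ e ∈ faceSupp p q P, e ≠ d := by
    by_contra! hall
    rw [Finset.sum_eq_single_of_mem d hd fun e he hne => absurd (hall e he) hne] at hsum
    exact hterm hsum
  rw [mem_faceSupp] at hd he
  obtain ⟨hp', hq'⟩ := direction_le hp hq hpq he.1 hd.1 hne (he.2.trans hd.2.symm)
  obtain ⟨ν, rfl⟩ := IsAlgClosed.exists_pow_nat_eq μ hp
  have hν : ν ≠ 0 := by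
    rintro rfl
    exact hμ (zero_pow (by omega))
  exact Set.mem_biUnion (x := (p, q)) ⟨⟨hp, hp'⟩, hq'⟩ ⟨ν, isRoot_facePoly₁ hν hpq' hsum, rfl⟩
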